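/- Let n ≥ 2 be an integer and let E ⊆ ℝⁿ be Lebesgue measurable with 0 < λ(E) < ∞. Then J_n(E) = n(n+1) · λ(E)² if and only if there exists a convex set K ⊆ ℝⁿ such that λ(E △ K) = 0, i.e. E coincides with a convex set up to a set of Lebesgue measure zero. -/

import Mathlib

open MeasureTheory
open scoped ENNReal

noncomputable section

/-- `Jn n E` is the `(n+1)`-st power of the `L^{n+1}` norm of the X-ray transform of the
indicator of `E`: the integral over directions `ξ` in the unit sphere (with the standard
unnormalized surface measure `volume.toSphere`) and points `x ∈ E` of the `n`-th power of
the length of the chord of `E` through `x` in direction `ξ`. -/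
def Jn (n : ℕ) (E : Set (EuclideanSpace ℝ (Fin n))) : ℝ≥0∞ :=
  ∫⁻ ξ : Metric.sphere (0 : EuclideanSpace ℝ (Fin n)) 1,
    (∫⁻ x in E, (volume {t : ℝ | x + t • (ξ : EuclideanSpace ℝ (Fin n)) ∈ E}) ^ n)
    ∂((volume : Measure (EuclideanSpace ℝ (Fin n))).toSphere)

open Set Filter Topology

section OrderStatistics

variable {α : Type*} [MeasurableSpace α]

theorem lintegral_measure_initialSegment_pow (r : α → α → Prop) [IsStrictTotalOrder α r]
    (hr : MeasurableSet {p : α × α | r p.1 p.2}) (k : ℕ) (μ : Measure α)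
    [SFinite μ] [NullSingletonClass μ] :
    ((k : ℝ≥0∞) + 1) * ∫⁻ s, μ {t | r t s} ^ k ∂μ = μ univ ^ (k + 1) := by
  have hdown (s : α) : MeasurableSet {t | r t s} := measurable_prodMk_right hr
  have hup (s : α) : MeasurableSet {t | r s t} := measurable_prodMk_left hr
  induction k generalizing μ with
  | zero => simp
  | succ k ih =>
    set F : α → ℝ≥0∞ := fun s ↦ μ {t | r t s} with hF
    have hFm : Measurable F := measurable_measure_prodMk_right hr
    have hrestrict (s : α) :
        ((k : ℝ≥0∞) + 1) * ∫⁻ t in {t | r t s}, F t ^ k ∂μ = F s ^ (k + 1) := by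
      have h := ih (μ.restrict {t | r t s})
      rw [Measure.restrict_apply_univ] at h
      rw [← h]
      congr 1
      refine setLIntegral_congr_fun (hdown s) fun t (ht : r t s) ↦ ?_
      simp only [hF]
      rw [Measure.restrict_apply (hdown t)]
      congr 2
      ext u
      simp only [mem_inter_iff, mem_ofPred_eq]
      exact ⟨fun h ↦ ⟨h, _root_.trans h ht⟩, fun h ↦ h.1⟩
    have hsplit (t : α) : μ {s | r t s} + F t = μ univ := by
      rw [hF, ← measure_union _ (hdown t)]
      · refine measure_congr (eventuallyEq_univ.2 ?_)
        have : ∀ᵐ s ∂μ, s ≠ t := by simp [ae_iff]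
        filter_upwards [this] with s hs
        have := trichotomous_of r s t
        simp only [mem_union, mem_ofPred_eq]
        tauto
      · rw [Set.disjoint_left]
        exact fun s h₁ h₂ ↦ asymm_of r h₁ h₂
    have hswap : ∫⁻ s, ∫⁻ t in {t | r t s}, F t ^ k ∂μ ∂μ = ∫⁻ t, F t ^ k * μ {s | r t s} ∂μ := by
      have hind (s : α) : ∫⁻ t in {t | r t s}, F t ^ k ∂μ =
          ∫⁻ t, {p : α × α | r p.1 p.2}.indicator (fun p ↦ F p.1 ^ k) (t, s) ∂μ := by
        rw [← lintegral_indicator (hdown s)]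
        rfl
      simp_rw [hind]
      rw [lintegral_lintegral_swap]
      · refine lintegral_congr fun t ↦ ?_
        rw [← lintegral_indicator_const (hup t)]
        rfl
      · have : Measurable ({p : α × α | r p.1 p.2}.indicator fun p ↦ F p.1 ^ k) :=
          ((hFm.comp measurable_fst).pow_const k).indicator hr
        exact (this.comp measurable_swap).aemeasurable
    have hrm : Measurable fun t ↦ μ {s | r t s} := measurable_measure_prodMk_left hr
    calc ((k + 1 : ℕ) + 1 : ℝ≥0∞) * ∫⁻ s, F s ^ (k + 1) ∂μ
        = ∫⁻ s, F s ^ (k + 1) ∂μ + (k + 1) * ∫⁻ s, F s ^ k * F s ∂μ := by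
          simp_rw [← pow_succ]
          push_cast
          ring
      _ = (k + 1) * ∫⁻ t, F t ^ k * μ {s | r t s} ∂μ + (k + 1) * ∫⁻ s, F s ^ k * F s ∂μ := by
          simp_rw [← hrestrict]
          rw [lintegral_const_mul' _ _ (by finiteness), hswap]
      _ = ((k + 1) * ∫⁻ t, F t ^ k ∂μ) * μ univ := by
          rw [← mul_add, ← lintegral_add_left (f := fun t ↦ F t ^ k * μ {s | r t s})
            ((hFm.pow_const k).mul hrm)]
          simp_rw [← mul_add, hsplit]
          rw [lintegral_mul_const _ (by fun_prop), mul_assoc]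
      _ = μ univ ^ (k + 1 + 1) := by rw [ih μ, ← pow_succ]

end OrderStatistics

section Convexity

theorem ae_add_right_of_ae {G : Type*} [AddGroup G] [MeasurableSpace G] [MeasurableAdd G]
    {μ : Measure G} [μ.IsAddRightInvariant] {p : G → Prop} (h : ∀ᵐ x ∂μ, p x) (c : G) :
    ∀ᵐ x ∂μ, p (x + c) :=
  (measurePreserving_add_right μ c).quasiMeasurePreserving.ae h

variable {V : Type*} [NormedAddCommGroup V] [NormedSpace ℝ V]
  [MeasurableSpace V] [BorelSpace V]

/-- Up to null sets, the segment joining two points of `E` is contained in `E`. -/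
def AEConvex (μ : Measure V) (E : Set V) : Prop :=
  ∀ᵐ v ∂μ, ∀ᵐ s ∂(volume.restrict (Ioo (0 : ℝ) 1)), ∀ᵐ x ∂μ, x ∈ E → x + v ∈ E → x + s • v ∈ E

variable {μ : Measure V} [μ.IsAddHaarMeasure] {E : Set V}

theorem AEConvex.of_convex {K : Set V} (hK : Convex ℝ K) (h : μ (symmDiff E K) = 0) :
    AEConvex μ E := by
  have hmem : ∀ᵐ x ∂μ, x ∈ E ↔ x ∈ K :=
    (measure_symmDiff_eq_zero_iff.1 h).mem_iff
  refine ae_of_all _ fun v ↦ ?_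
  filter_upwards [ae_restrict_mem measurableSet_Ioo] with s hs
  filter_upwards [hmem, ae_add_right_of_ae hmem v, ae_add_right_of_ae hmem (s • v)] with x h₀ h₁ h₂
  rw [h₀, h₁, h₂]
  intro hx hxv
  exact hK.add_smul_mem hx hxv ⟨hs.1.le, hs.2.le⟩

theorem AEConvex.measure_closedBall_diff_le (h : AEConvex μ E) {x y : V} {t r : ℝ}
    (ht : t ∈ Ioo (0 : ℝ) 1) (hr : 0 < r) :
    μ (Metric.closedBall (x + t • (y - x)) r \ E) ≤
      μ (Metric.closedBall x (3 * r) \ E) + μ (Metric.closedBall y (3 * r) \ E) := by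
  obtain ⟨v, hv, hvr⟩ : ∃ v, (∀ᵐ s ∂(volume.restrict (Ioo (0 : ℝ) 1)), ∀ᵐ x ∂μ,
      x ∈ E → x + v ∈ E → x + s • v ∈ E) ∧ v ∈ Metric.ball (y - x) r := by
    have := (Measure.dense_of_ae h).inter_open_nonempty _ Metric.isOpen_ball
      ⟨y - x, Metric.mem_ball_self hr⟩
    obtain ⟨v, hv, hv'⟩ := this
    exact ⟨v, hv', hv⟩
  obtain ⟨s, hs, hs01, hst⟩ : ∃ s : ℝ, (∀ᵐ x ∂μ, x ∈ E → x + v ∈ E → x + s • v ∈ E) ∧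
      s ∈ Ioo (0 : ℝ) 1 ∧ |t - s| * ‖y - x‖ < r := by
    have hopen : IsOpen {s : ℝ | s ∈ Ioo (0 : ℝ) 1 ∧ |t - s| * ‖y - x‖ < r} :=
      isOpen_Ioo.inter
        (isOpen_lt (f := fun s ↦ |t - s| * ‖y - x‖) (by fun_prop) continuous_const)
    rw [ae_restrict_iff' measurableSet_Ioo] at hv
    obtain ⟨s, hs, hs'⟩ := (Measure.dense_of_ae hv).inter_open_nonempty _ hopen
      ⟨t, ht, by simpa using hr⟩
    exact ⟨s, hs' hs.1, hs⟩
  rw [mem_ball_iff_norm] at hvr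
  have hs₁ := ae_add_right_of_ae hs (-(s • v))
  have hsub : Metric.closedBall (x + t • (y - x)) r \ E ≤ᵐ[μ]
      ((fun z ↦ z + -(s • v)) ⁻¹' (Metric.closedBall x (3 * r) \ E) ∪
        (fun z ↦ z + (v - s • v)) ⁻¹' (Metric.closedBall y (3 * r) \ E) : Set V) := by
    filter_upwards [hs₁] with z hz hzm
    obtain ⟨hzb, hzE⟩ : z ∈ Metric.closedBall (x + t • (y - x)) r ∧ z ∉ E := hzm
    rw [mem_closedBall_iff_norm] at hzb
    have e1 : z + -(s • v) + v = z + (v - s • v) := by abel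
    have e2 : z + -(s • v) + s • v = z := by abel
    rw [e1, e2] at hz
    have hts : ‖(t - s) • (y - x)‖ ≤ r := by
      rw [norm_smul]
      exact hst.le
    have n1 : ‖z + -(s • v) - x‖ ≤ 3 * r := by
      have : z + -(s • v) - x =
          (z - (x + t • (y - x))) + (t - s) • (y - x) - s • (v - (y - x)) := by module
      rw [this]
      have h3 : ‖s • (v - (y - x))‖ ≤ r := by
        rw [norm_smul, Real.norm_of_nonneg hs01.1.le]
        nlinarith [norm_nonneg (v - (y - x)), hs01.1, hs01.2]
      linarith [norm_sub_le ((z - (x + t • (y - x))) + (t - s) • (y - x)) (s • (v - (y - x))),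
        norm_add_le (z - (x + t • (y - x))) ((t - s) • (y - x))]
    have n2 : ‖z + (v - s • v) - y‖ ≤ 3 * r := by
      have : z + (v - s • v) - y =
          (z - (x + t • (y - x))) + (t - s) • (y - x) + (1 - s) • (v - (y - x)) := by module
      rw [this]
      have h3 : ‖(1 - s) • (v - (y - x))‖ ≤ r := by
        rw [norm_smul, Real.norm_of_nonneg (by linarith [hs01.2])]
        nlinarith [norm_nonneg (v - (y - x)), hs01.1, hs01.2]
      linarith [norm_add_le ((z - (x + t • (y - x))) + (t - s) • (y - x)) ((1 - s) • (v - (y - x))),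
        norm_add_le (z - (x + t • (y - x))) ((t - s) • (y - x))]
    change z ∈ (_ ∪ _ : Set V)
    simp only [mem_union, mem_preimage, Set.mem_sdiff, mem_closedBall_iff_norm]
    tauto
  refine (measure_mono_ae hsub).trans ((measure_union_le _ _).trans ?_)
  rw [measure_preimage_add_right, measure_preimage_add_right]

/-- The points at which `E` has density one. -/
def densityPoints (μ : Measure V) (E : Set V) : Set V :=
  {x | Tendsto (fun r ↦ μ (Metric.closedBall x r \ E) / μ (Metric.closedBall x r))
    (𝓝[>] (0 : ℝ)) (𝓝 0)}

variable [FiniteDimensional ℝ V]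

theorem measure_symmDiff_densityPoints (hE : MeasurableSet E) :
    μ (symmDiff E (densityPoints μ E)) = 0 := by
  rw [measure_symmDiff_eq_zero_iff]
  filter_upwards [Besicovitch.ae_tendsto_measure_inter_div_of_measurableSet μ hE.compl] with x hx
  simp only [eq_iff_iff]
  change x ∈ E ↔ x ∈ densityPoints μ E
  have hset (r : ℝ) : Eᶜ ∩ Metric.closedBall x r = Metric.closedBall x r \ E := by
    rw [inter_comm, sdiff_eq]
  simp only [hset] at hx
  constructor
  · intro hxE
    simpa [densityPoints, hxE] using hx
  · intro hxD
    by_contra hxE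
    have := tendsto_nhds_unique hx hxD
    simp [hxE] at this

theorem AEConvex.convex_densityPoints (h : AEConvex μ E) :
    Convex ℝ (densityPoints μ E) := by
  rw [convex_iff_forall_pos]
  intro x hx y hy a b ha hb hab
  have hz : a • x + b • y = x + b • (y - x) := by
    rw [← eq_sub_iff_add_eq] at hab
    subst hab
    module
  rw [hz]
  set c : ℝ≥0∞ := ENNReal.ofReal (3 ^ Module.finrank ℝ V)
  have h3 : Tendsto (fun r : ℝ ↦ 3 * r) (𝓝[>] 0) (𝓝[>] 0) := by
    refine tendsto_nhdsWithin_iff.2 ⟨?_, ?_⟩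
    · exact ((continuous_const_mul (3 : ℝ)).tendsto' 0 0 (by simp)).mono_left nhdsWithin_le_nhds
    · filter_upwards [self_mem_nhdsWithin] with r (hr : 0 < r)
      exact mul_pos three_pos hr
  have hlim := ENNReal.Tendsto.const_mul (a := c)
    ((Tendsto.comp hx h3).add (Tendsto.comp hy h3)) (.inr ENNReal.ofReal_ne_top)
  rw [add_zero, mul_zero] at hlim
  refine tendsto_of_tendsto_of_tendsto_of_le_of_le' tendsto_const_nhds hlim
    (Eventually.of_forall fun _ ↦ zero_le) ?_
  filter_upwards [self_mem_nhdsWithin] with r (hr : 0 < r)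
  have hc : c ≠ 0 := by simp [c]
  have hvol (w : V) : μ (Metric.closedBall w (3 * r)) =
      c * μ (Metric.closedBall (x + b • (y - x)) r) := by
    rw [Measure.addHaar_closedBall_mul_of_pos μ w three_pos,
      Measure.addHaar_closedBall_center μ (x + b • (y - x))]
  have hle := h.measure_closedBall_diff_le (x := x) (y := y) ⟨hb, by linarith⟩ hr
  simp only [Function.comp_apply, hvol]
  rw [← ENNReal.add_div, ← mul_div_assoc, ENNReal.mul_div_mul_left _ _ hc ENNReal.ofReal_ne_top]
  gcongr

theorem aeConvex_iff_exists_convex (hE : MeasurableSet E) :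
    AEConvex μ E ↔ ∃ K : Set V, Convex ℝ K ∧ μ (symmDiff E K) = 0 :=
  ⟨fun h ↦ ⟨densityPoints μ E, h.convex_densityPoints, measure_symmDiff_densityPoints hE⟩,
    fun ⟨_, hK, h⟩ ↦ .of_convex hK h⟩

end Convexity

section Chords

/-- The fraction of the segment from `x` to `x + v` that lies in `E`. -/
def segmentFraction {V : Type*} [AddCommGroup V] [Module ℝ V] (E : Set V) (x v : V) : ℝ≥0∞ :=
  volume.restrict (Ioo (0 : ℝ) 1) {s | x + s • v ∈ E}

theorem lintegral_ray_segmentFraction_pow {A : Set ℝ} (hA : MeasurableSet A) (k : ℕ) :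
    ((k : ℝ≥0∞) + 1) * ∫⁻ r in Ioi (0 : ℝ), ENNReal.ofReal (r ^ k) *
      A.indicator (fun r ↦ segmentFraction A 0 r ^ k) r = volume (A ∩ Ioi 0) ^ (k + 1) := by
  have h := lintegral_measure_initialSegment_pow (α := ℝ) (· < ·)
    (measurableSet_lt measurable_fst measurable_snd) k (volume.restrict (A ∩ Ioi 0))
  rw [Measure.restrict_apply_univ] at h
  rw [← h]
  congr 1
  rw [← Measure.restrict_restrict hA, ← lintegral_indicator hA]
  refine setLIntegral_congr_fun measurableSet_Ioi fun r (hr : 0 < r) ↦ ?_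
  by_cases hrA : r ∈ A
  · simp only [indicator_of_mem hrA]
    rw [ENNReal.ofReal_pow hr.le, ← mul_pow]
    congr 1
    have hset : {s | 0 + s • r ∈ A} ∩ Ioo (0 : ℝ) 1 = (r * ·) ⁻¹' (A ∩ Ioo 0 r) := by
      ext s
      simp only [zero_add, smul_eq_mul, mem_inter_iff, mem_ofPred_eq, mem_Ioo, mem_preimage,
        mul_comm s r, mul_pos_iff_of_pos_left hr, mul_lt_iff_lt_one_right hr]
    rw [segmentFraction, Measure.restrict_apply' measurableSet_Ioo, hset,
      Real.volume_preimage_mul_left hr.ne', abs_of_pos (inv_pos.2 hr), ← mul_assoc,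
      ← ENNReal.ofReal_mul hr.le, mul_inv_cancel₀ hr.ne', ENNReal.ofReal_one, one_mul,
      Measure.restrict_restrict hA, Measure.restrict_apply' (hA.inter measurableSet_Ioi)]
    congr 1
    ext s
    simp only [mem_inter_iff, mem_ofPred_eq, mem_Ioo, mem_Ioi]
    tauto
  · simp [indicator_of_notMem hrA]

variable {V : Type*} [NormedAddCommGroup V] [NormedSpace ℝ V] [FiniteDimensional ℝ V]
  [MeasurableSpace V] [BorelSpace V] {μ : Measure V} [μ.IsAddHaarMeasure] {E : Set V}

theorem lintegral_eq_lintegral_toSphere [Nontrivial V] {f : V → ℝ≥0∞} (hf : Measurable f) :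
    ∫⁻ x, f x ∂μ = ∫⁻ ξ : Metric.sphere (0 : V) 1, (∫⁻ r in Ioi (0 : ℝ),
      ENNReal.ofReal (r ^ (Module.finrank ℝ V - 1)) * f (r • (ξ : V))) ∂μ.toSphere := by
  have hpol := μ.measurePreserving_homeomorphUnitSphereProd
  calc ∫⁻ x, f x ∂μ = ∫⁻ x : ({0}ᶜ : Set V), f x ∂(μ.comap (↑)) := by
        rw [lintegral_subtype_comap (measurableSet_singleton _).compl, restrict_compl_singleton]
    _ = ∫⁻ p : Metric.sphere (0 : V) 1 × Ioi (0 : ℝ), f (p.2.1 • p.1.1)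
          ∂(μ.toSphere.prod (.volumeIoiPow (Module.finrank ℝ V - 1))) := by
        rw [← hpol.lintegral_comp (by fun_prop)]
        refine lintegral_congr fun x ↦ ?_
        congr 1
        exact congrArg Subtype.val ((homeomorphUnitSphereProd V).symm_apply_apply x).symm
    _ = _ := by
        rw [lintegral_prod _ (by fun_prop)]
        refine lintegral_congr fun ξ ↦ ?_
        rw [Measure.volumeIoiPow, lintegral_withDensity_eq_lintegral_mul _ (by fun_prop)
          (by fun_prop), ← lintegral_subtype_comap measurableSet_Ioi]
        rfl

theorem exists_weight_lintegral_eq_lintegral_line (μ : Measure V) [μ.IsAddHaarMeasure] {ξ : V}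
    (hξ : ξ ≠ 0) : ∃ φ : V → ℝ≥0∞, Measurable φ ∧ ∀ f : V → ℝ≥0∞, Measurable f →
      ∫⁻ x, f x ∂μ = ∫⁻ x, φ x * (∫⁻ t : ℝ, f (x + t • ξ)) ∂μ := by
  obtain ⟨g, hg⟩ : ∃ g : StrongDual ℝ V, g ξ = 1 := SeparatingDual.exists_eq_one hξ
  set φ : V → ℝ≥0∞ := (g ⁻¹' Icc 0 1).indicator 1 with hφ
  have hφm : Measurable φ := measurable_one.indicator (g.continuous.measurable measurableSet_Icc)
  refine ⟨φ, hφm, fun f hf ↦ ?_⟩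
  have hint (x : V) : ∫⁻ t : ℝ, φ (x + -(t • ξ)) = 1 := by
    have : (fun t : ℝ ↦ φ (x + -(t • ξ))) = (Icc (g x - 1) (g x)).indicator 1 := by
      ext t
      have : x + -(t • ξ) ∈ g ⁻¹' Icc 0 1 ↔ t ∈ Icc (g x - 1) (g x) := by
        simp only [mem_preimage, map_add, map_neg, map_smul, hg, smul_eq_mul, mul_one, mem_Icc]
        constructor <;> rintro ⟨h₁, h₂⟩ <;> constructor <;> linarith
      simp only [hφ, indicator, this, Pi.one_apply]
    rw [this, lintegral_indicator_one measurableSet_Icc]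
    simp
  symm
  calc ∫⁻ x, φ x * (∫⁻ t : ℝ, f (x + t • ξ)) ∂μ
      = ∫⁻ x, (∫⁻ t : ℝ, φ x * f (x + t • ξ)) ∂μ := by
        refine lintegral_congr fun x ↦ ?_
        rw [lintegral_const_mul _ (by fun_prop)]
    _ = ∫⁻ t : ℝ, ∫⁻ x, φ x * f (x + t • ξ) ∂μ := lintegral_lintegral_swap (by fun_prop)
    _ = ∫⁻ t : ℝ, ∫⁻ x, φ (x + -(t • ξ)) * f x ∂μ := by
        refine lintegral_congr fun t ↦ ?_
        rw [← lintegral_add_right_eq_self (fun x ↦ φ (x + -(t • ξ)) * f x) (t • ξ)]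
        simp
    _ = ∫⁻ x, (∫⁻ t : ℝ, φ (x + -(t • ξ)) * f x) ∂μ := lintegral_lintegral_swap (by fun_prop)
    _ = ∫⁻ x, f x ∂μ := by
        refine lintegral_congr fun x ↦ ?_
        rw [lintegral_mul_const _ (by fun_prop), hint, one_mul]

theorem lintegral_chord_pow (hE : MeasurableSet E) {ξ : V} (hξ : ξ ≠ 0) (n : ℕ) :
    ∫⁻ x in E, volume {t : ℝ | x + t • ξ ∈ E} ^ n ∂μ =
      ((n : ℝ≥0∞) + 1) * ∫⁻ x in E, volume ({t : ℝ | x + t • ξ ∈ E} ∩ Ioi 0) ^ n ∂μ := by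
  obtain ⟨φ, hφ, h⟩ := exists_weight_lintegral_eq_lintegral_line μ hξ
  have hS : MeasurableSet {p : V × ℝ | p.1 + p.2 • ξ ∈ E} :=
    hE.preimage (f := fun p : V × ℝ ↦ p.1 + p.2 • ξ) (by fun_prop)
  have hA (x : V) : MeasurableSet {t : ℝ | x + t • ξ ∈ E} := measurable_prodMk_left hS
  have hm₁ : Measurable fun x ↦ volume {t : ℝ | x + t • ξ ∈ E} := measurable_measure_prodMk_left hS
  have hm₂ : Measurable fun x ↦ volume ({t : ℝ | x + t • ξ ∈ E} ∩ Ioi 0) :=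
    measurable_measure_prodMk_left
      (hS.inter (measurable_snd (measurableSet_Ioi : MeasurableSet (Ioi (0 : ℝ)))))
  have hind (F : V → ℝ≥0∞) (x : V) : ∫⁻ t : ℝ, E.indicator F (x + t • ξ) =
      ∫⁻ t in {t : ℝ | x + t • ξ ∈ E}, F (x + t • ξ) := by
    rw [← lintegral_indicator (hA x)]
    rfl
  rw [← lintegral_indicator hE, ← lintegral_indicator hE,
    h _ ((hm₁.pow_const n).indicator hE),
    h _ ((hm₂.pow_const n).indicator hE), ← lintegral_const_mul' _ _ (by finiteness)]
  refine lintegral_congr fun x ↦ ?_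
  rw [hind, hind, mul_left_comm]
  congr 1
  have hshift (t u : ℝ) : x + t • ξ + u • ξ = x + (t + u) • ξ := by module
  have h₁ (t : ℝ) : volume {u : ℝ | x + t • ξ + u • ξ ∈ E} = volume {u : ℝ | x + u • ξ ∈ E} := by
    simp_rw [hshift]
    exact measure_preimage_add volume t {u : ℝ | x + u • ξ ∈ E}
  have h₂ (t : ℝ) : volume ({u : ℝ | x + t • ξ + u • ξ ∈ E} ∩ Ioi 0) =
      volume.restrict {u : ℝ | x + u • ξ ∈ E} {u | u > t} := by
    rw [Measure.restrict_apply' (hA x), 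
      ← measure_preimage_add volume t ({u | u > t} ∩ {u : ℝ | x + u • ξ ∈ E})]
    congr 1
    ext u
    simp [hshift, and_comm]
  simp_rw [h₁, h₂]
  rw [lintegral_measure_initialSegment_pow (α := ℝ) (· > ·)
    (measurableSet_lt measurable_snd measurable_fst) n]
  simp [pow_succ]

theorem measurableSet_add_smul_mem (hE : MeasurableSet E) :
    MeasurableSet {p : (V × V) × ℝ | p.1.1 + p.2 • p.1.2 ∈ E} :=
  hE.preimage (f := fun p : (V × V) × ℝ ↦ p.1.1 + p.2 • p.1.2) (by fun_prop)

theorem measurable_segmentFraction (hE : MeasurableSet E) :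
    Measurable fun p : V × V ↦ segmentFraction E p.1 p.2 :=
  measurable_measure_prodMk_left (measurableSet_add_smul_mem hE)

theorem lintegral_segmentFraction_pow (hE : MeasurableSet E) {k : ℕ}
    (hk : Module.finrank ℝ V = k + 1) (x : V) :
    ((k : ℝ≥0∞) + 1) * ∫⁻ v, {v | x + v ∈ E}.indicator (fun v ↦ segmentFraction E x v ^ k) v ∂μ =
      ∫⁻ ξ : Metric.sphere (0 : V) 1,
        volume ({t : ℝ | x + t • (ξ : V) ∈ E} ∩ Ioi 0) ^ (k + 1) ∂μ.toSphere := by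
  have : Nontrivial V := Module.nontrivial_of_finrank_pos (R := ℝ) (by lia)
  have hS : MeasurableSet {v | x + v ∈ E} := hE.preimage (f := fun v ↦ x + v) (by fun_prop)
  have hm : Measurable fun v ↦ segmentFraction E x v ^ k :=
    ((measurable_segmentFraction hE).comp measurable_prodMk_left).pow_const k
  rw [lintegral_eq_lintegral_toSphere (hm.indicator hS), ← lintegral_const_mul' _ _ (by finiteness)]
  refine lintegral_congr fun ξ ↦ ?_
  have hA : MeasurableSet {t : ℝ | x + t • (ξ : V) ∈ E} :=
    hE.preimage (f := fun t : ℝ ↦ x + t • (ξ : V)) (by fun_prop)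
  rw [← lintegral_ray_segmentFraction_pow hA, hk]
  congr 1
  refine lintegral_congr fun r ↦ ?_
  rw [Nat.add_sub_cancel]
  congr 1
  simp only [indicator, mem_ofPred_eq, segmentFraction, mul_smul, smul_eq_mul, zero_add]

theorem lintegral_toSphere_chord_pow (hE : MeasurableSet E) {k : ℕ}
    (hk : Module.finrank ℝ V = k + 1) :
    ∫⁻ ξ : Metric.sphere (0 : V) 1,
        (∫⁻ x in E, volume {t : ℝ | x + t • (ξ : V) ∈ E} ^ (k + 1) ∂μ) ∂μ.toSphere =
      ((k : ℝ≥0∞) + 1) * ((k : ℝ≥0∞) + 1 + 1) *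
        ∫⁻ p in {p : V × V | p.1 ∈ E ∧ p.1 + p.2 ∈ E},
          segmentFraction E p.1 p.2 ^ k ∂(μ.prod μ) := by
  have hT : MeasurableSet {p : V × V | p.1 + p.2 ∈ E} :=
    hE.preimage (f := fun p : V × V ↦ p.1 + p.2) (by fun_prop)
  have hS : MeasurableSet {p : V × V | p.1 ∈ E ∧ p.1 + p.2 ∈ E} := (measurable_fst hE).inter hT
  have hm := (measurable_segmentFraction hE).pow_const k
  have hprod : ∫⁻ p in {p : V × V | p.1 ∈ E ∧ p.1 + p.2 ∈ E},
      segmentFraction E p.1 p.2 ^ k ∂(μ.prod μ) =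
      ∫⁻ x in E, (∫⁻ v, {v | x + v ∈ E}.indicator (fun v ↦ segmentFraction E x v ^ k) v ∂μ) ∂μ := by
    rw [← lintegral_indicator hS, lintegral_prod _ (hm.indicator hS).aemeasurable,
      ← lintegral_indicator hE]
    refine lintegral_congr fun x ↦ ?_
    by_cases hx : x ∈ E
    · rw [indicator_of_mem hx]
      refine lintegral_congr fun v ↦ ?_
      have : (x, v) ∈ {p : V × V | p.1 ∈ E ∧ p.1 + p.2 ∈ E} ↔ v ∈ {v | x + v ∈ E} := by simp [hx]
      by_cases hv : v ∈ {v | x + v ∈ E}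
      · rw [indicator_of_mem (this.2 hv), indicator_of_mem hv]
      · rw [indicator_of_notMem (mt this.1 hv), indicator_of_notMem hv]
    · rw [indicator_of_notMem hx]
      exact lintegral_eq_zero_of_ae_eq_zero
        (ae_of_all _ fun v ↦ indicator_of_notMem (fun h ↦ hx h.1) _)
  have hmeas : Measurable fun p : V × Metric.sphere (0 : V) 1 ↦
      volume ({t : ℝ | p.1 + t • (p.2 : V) ∈ E} ∩ Ioi 0) ^ (k + 1) := by
    refine Measurable.pow_const (measurable_measure_prodMk_left
      (s := {q : (V × Metric.sphere (0 : V) 1) × ℝ | q.1.1 + q.2 • (q.1.2 : V) ∈ E ∧ 0 < q.2}) ?_) _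
    exact (hE.preimage (f := fun q : (V × Metric.sphere (0 : V) 1) × ℝ ↦
      q.1.1 + q.2 • (q.1.2 : V)) (by fun_prop)).inter (measurable_snd measurableSet_Ioi)
  rw [hprod, mul_right_comm, ← lintegral_const_mul' _ _ (by finiteness)]
  simp_rw [lintegral_segmentFraction_pow hE hk]
  rw [lintegral_lintegral_swap (f := fun x (ξ : Metric.sphere (0 : V) 1) ↦
      volume ({t : ℝ | x + t • (ξ : V) ∈ E} ∩ Ioi 0) ^ (k + 1)) hmeas.aemeasurable,
    mul_comm, ← lintegral_const_mul' _ _ (by finiteness)]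
  refine lintegral_congr fun ξ ↦ ?_
  rw [lintegral_chord_pow hE (ne_zero_of_mem_unit_sphere ξ)]
  push_cast
  rfl

theorem prod_measure_mem_add_mem (hE : MeasurableSet E) :
    (μ.prod μ) {p : V × V | p.1 ∈ E ∧ p.1 + p.2 ∈ E} = μ E ^ 2 := by
  have := (measurePreserving_prod_add μ μ).measure_preimage (hE.prod hE).nullMeasurableSet
  rw [Measure.prod_prod, ← sq] at this
  exact this

theorem aeConvex_iff_ae_segmentFraction (hE : MeasurableSet E) :
    AEConvex μ E ↔ ∀ᵐ p ∂(μ.prod μ), p.1 ∈ E → p.1 + p.2 ∈ E → segmentFraction E p.1 p.2 = 1 := by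
  have : IsProbabilityMeasure (volume.restrict (Ioo (0 : ℝ) 1)) := ⟨by simp⟩
  have hsum : MeasurableSet {p : V × V | p.1 + p.2 ∈ E} :=
    hE.preimage (f := fun p : V × V ↦ p.1 + p.2) (by fun_prop)
  have hmeas : MeasurableSet
      {p : V × V | p.1 ∈ E → p.1 + p.2 ∈ E → segmentFraction E p.1 p.2 = 1} := by
    have h := ((measurable_fst hE).compl).union
      (hsum.compl.union (measurable_segmentFraction hE (measurableSet_singleton 1)))
    convert h using 1
    ext p
    simp only [mem_ofPred_eq, mem_union, mem_compl_iff, mem_preimage, mem_singleton_iff]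
    tauto
  rw [Measure.ae_prod_iff_ae_ae hmeas, Measure.ae_ae_comm hmeas]
  refine eventually_congr (ae_of_all _ fun v ↦ ?_)
  have hmeas' : MeasurableSet {p : ℝ × V | p.2 ∈ E → p.2 + v ∈ E → p.2 + p.1 • v ∈ E} := by
    have h := ((measurable_snd hE).compl : MeasurableSet (Prod.snd ⁻¹' E : Set (ℝ × V))ᶜ).union
      ((hE.preimage (f := fun p : ℝ × V ↦ p.2 + v) (by fun_prop)).compl.union
        (hE.preimage (f := fun p : ℝ × V ↦ p.2 + p.1 • v) (by fun_prop)))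
    convert h using 1
    ext p
    simp only [mem_ofPred_eq, mem_union, mem_compl_iff, mem_preimage]
    tauto
  rw [Measure.ae_ae_comm hmeas']
  refine eventually_congr (ae_of_all _ fun x ↦ ?_)
  have hA : MeasurableSet {s : ℝ | x + s • v ∈ E} :=
    hE.preimage (f := fun s : ℝ ↦ x + s • v) (by fun_prop)
  rw [eventually_imp_distrib_left, eventually_imp_distrib_left, segmentFraction,
    ← mem_ae_iff_prob_eq_one hA]
  rfl

theorem lintegral_segmentFraction_pow_eq_iff (hE : MeasurableSet E) (hfin : μ E ≠ ∞) {k : ℕ}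
    (hk : k ≠ 0) :
    ∫⁻ p in {p : V × V | p.1 ∈ E ∧ p.1 + p.2 ∈ E},
      segmentFraction E p.1 p.2 ^ k ∂(μ.prod μ) = μ E ^ 2 ↔ AEConvex μ E := by
  have hsum : MeasurableSet {p : V × V | p.1 + p.2 ∈ E} :=
    hE.preimage (f := fun p : V × V ↦ p.1 + p.2) (by fun_prop)
  have hS : MeasurableSet {p : V × V | p.1 ∈ E ∧ p.1 + p.2 ∈ E} := (measurable_fst hE).inter hsum
  have hle (p : V × V) : segmentFraction E p.1 p.2 ^ k ≤ 1 := by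
    refine pow_le_one₀ zero_le ((measure_mono (subset_univ _)).trans ?_)
    simp
  rw [aeConvex_iff_ae_segmentFraction hE, ← prod_measure_mem_add_mem hE, ← setLIntegral_one]
  trans (fun p : V × V ↦ segmentFraction E p.1 p.2 ^ k)
    =ᵐ[(μ.prod μ).restrict {p | p.1 ∈ E ∧ p.1 + p.2 ∈ E}] 1
  · refine ⟨fun h ↦ ?_, fun h ↦ lintegral_congr_ae h⟩
    refine ae_eq_of_ae_le_of_lintegral_le (ae_of_all _ hle) ?_ measurable_one.aemeasurable h.ge
    rw [h, setLIntegral_one, prod_measure_mem_add_mem hE]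
    finiteness
  · rw [EventuallyEq, ae_restrict_iff' hS]
    refine eventually_congr (ae_of_all _ fun p ↦ ?_)
    have hpow : segmentFraction E p.1 p.2 ^ k = 1 ↔ segmentFraction E p.1 p.2 = 1 := by
      simpa using (ENNReal.pow_right_strictMono hk).injective.eq_iff
        (a := segmentFraction E p.1 p.2) (b := 1)
    simp only [mem_ofPred_eq, and_imp, Pi.one_apply, hpow]

end Chords

/-- equality `Jn E = n(n+1)·λ(E)²` holds iff `E` is convex up to a null set. -/
theorem statement13 (n : ℕ) (hn : 2 ≤ n) (E : Set (EuclideanSpace ℝ (Fin n)))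
    (hE : MeasurableSet E) (hpos : 0 < volume E) (hfin : volume E < ⊤) :
    Jn n E = (n : ℝ≥0∞) * ((n : ℝ≥0∞) + 1) * (volume E) ^ 2 ↔
      ∃ K : Set (EuclideanSpace ℝ (Fin n)), Convex ℝ K ∧ volume (symmDiff E K) = 0 := by
  obtain ⟨k, rfl⟩ : ∃ k, n = k + 1 := ⟨n - 1, by lia⟩
  rw [← aeConvex_iff_exists_convex hE,
    ← lintegral_segmentFraction_pow_eq_iff hE hfin.ne (k := k) (by lia), Jn,
    lintegral_toSphere_chord_pow hE (finrank_euclideanSpace_fin)]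
  push_cast
  rw [ENNReal.mul_right_inj (by simp) (by finiteness)]
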